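/- Suppose E[V(y Z)] < ∞ for every y > 0, where V is the convex conjugate of the utility function U with concave envelope U_c. Then the value function x ↦ u(x, U_c) and the concave envelope of the value function x ↦ u(x, U) coincide on (0, ∞). -/

import Mathlib

/-!
Write `w(x) = u(x, U_c)` and `V` for the convex conjugate of `U`.

`env ≤ w`: since `U_c` is concave and the sets `C(x)` combine convexly, `w` is concave
(`envelopeValue_concave`), and it dominates `u(·, U)` because `U ≤ U_c`. Minimality of the envelope
then gives the inequality.

`w ≤ env`: this is conjugate duality. From `U_c(x) ≤ V(y) + x y` one gets the weak bound
`w(x) ≤ E[V(qZ)] + q x` for every `q > 0` (`valueFn_envelope_le`). Conversely, a measurable choice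
of near-optimisers of `x ↦ U(x) - q Z(ω) x` shows that
`E[V(qZ)] ≤ sup_{z > 0} (u(z, U) - q z)` (`exists_valueFn_ge`). Monotonicity of `U` allows the
choice to be made among countably many values, and integrability of `V(qZ/2)` makes the chosen
payoff have finite price. Now `env` is finite and concave on `(0, ∞)`, so at `x` it has a
supergradient `p ≥ 0` (`exists_nonneg_supergradient`). As `u(z, U) ≤ env z ≤ env x + p (z - x)`,
taking `q = p + ε` gives `E[V(qZ)] ≤ env x - p x`, and the weak bound yields `w(x) ≤ env x + ε x`.
-/

open MeasureTheory Filter Set Topology ENNReal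

noncomputable section

/-- The utility function extended to all of `ℝ`, with value `−∞` on `(−∞,0)` and
`U(0) := lim_{x ↓ 0} U(x)` (here, by monotonicity, the infimum over `(0,∞)`). -/
def Uext (U : ℝ → ℝ) : ℝ → EReal := fun x =>
  if 0 < x then (U x : EReal)
  else if x = 0 then ⨅ z : {z : ℝ // 0 < z}, ((U z.1 : ℝ) : EReal)
  else ⊥

/-- A (possibly non-concave) utility function. -/
structure IsUtility (U : ℝ → ℝ) : Prop where
  mono : ∀ ⦃x y : ℝ⦄, 0 < x → x ≤ y → U x ≤ U y
  nonconst : ∃ x y : ℝ, 0 < x ∧ 0 < y ∧ U x ≠ U y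
  usc : UpperSemicontinuousOn U (Set.Ioi 0)
  growth : Filter.Tendsto (fun x => U x / x) Filter.atTop (nhds 0)
  pos_limit : ∃ x : ℝ, 0 < x ∧ 0 < U x

/-- Concavity for `EReal`-valued functions on `ℝ`. -/
def ERealConcave (g : ℝ → EReal) : Prop :=
  ∀ x y : ℝ, ∀ t : ℝ, 0 ≤ t → t ≤ 1 →
    ((t : ℝ) : EReal) * g x + (((1 - t) : ℝ) : EReal) * g y ≤ g (t * x + (1 - t) * y)

/-- `Uc` is the concave envelope of the utility `U`: the smallest concave function
dominating (the extension of) `U`. -/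
def IsConcaveEnvelope (U : ℝ → ℝ) (Uc : ℝ → EReal) : Prop :=
  ERealConcave Uc ∧ (∀ x : ℝ, Uext U x ≤ Uc x) ∧
    ∀ g : ℝ → EReal, ERealConcave g → (∀ x : ℝ, Uext U x ≤ g x) → ∀ x : ℝ, Uc x ≤ g x

/-- The convex conjugate `V(y) = sup_{x > 0} (U(x) − x y)`. -/
def conj (U : ℝ → ℝ) (y : ℝ) : ℝ :=
  sSup ((fun x => U x - x * y) '' Set.Ioi (0 : ℝ))

/-- The subdifferential of a convex function `V` (viewed on `(0,∞)`). -/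
def subdiff (V : ℝ → ℝ) (y : ℝ) : Set ℝ :=
  {q : ℝ | ∀ z : ℝ, 0 < z → V y + q * (z - y) ≤ V z}

/-- The extended asymptotic elasticity `EAE(V) = limsup_{y ↓ 0} sup_{q ∈ ∂V(y)} |q| y / V(y)`. -/
def EAE (V : ℝ → ℝ) : EReal :=
  Filter.limsup (fun y : ℝ => ⨆ q ∈ subdiff V y, (((|q| * y / V y) : ℝ) : EReal))
    (nhdsWithin (0 : ℝ) (Set.Ioi 0))

/-- The positive part of an extended real number, as an element of `ℝ≥0∞`. -/
def erealPos (a : EReal) : ℝ≥0∞ := if a = ⊤ then ⊤ else ENNReal.ofReal a.toReal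

/-- The expectation of an `EReal`-valued function: `E[g] = E[g⁺] − E[g⁻]`, with the
convention `E[g] = −∞` whenever the negative part `g⁻` is not integrable. -/
def eexp {Ω : Type*} [MeasurableSpace Ω] (μ : Measure Ω) (g : Ω → EReal) : EReal :=
  if (∫⁻ ω, erealPos (-(g ω)) ∂μ) < ⊤ then
    ((∫⁻ ω, erealPos (g ω) ∂μ : ℝ≥0∞) : EReal) - (((∫⁻ ω, erealPos (-(g ω)) ∂μ).toReal : ℝ) : EReal)
  else ⊥

/-- The set `C(x)` of attainable terminal liquidation values: nonnegative measurable `f`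
with `E[Z f] ≤ x`. -/
def Cset {Ω : Type*} [MeasurableSpace Ω] (μ : Measure Ω) (Z : Ω → ℝ) (x : ℝ) :
    Set (Ω → ℝ) :=
  {f | Measurable f ∧ (∀ ω, 0 ≤ f ω) ∧
    (∫⁻ ω, ENNReal.ofReal (Z ω * f ω) ∂μ) ≤ ENNReal.ofReal x}

/-- The value function `u(x, W) = sup {E[W(f)] : f ∈ C(x)}`. -/
def valueFn {Ω : Type*} [MeasurableSpace Ω] (μ : Measure Ω) (Z : Ω → ℝ)
    (W : ℝ → EReal) (x : ℝ) : EReal :=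
  ⨆ f ∈ Cset μ Z x, eexp μ (fun ω => W (f ω))

end

/-! ### The utility function, its conjugate and its concave envelope -/

theorem Uext_of_pos (U : ℝ → ℝ) {x : ℝ} (hx : 0 < x) : Uext U x = (U x : EReal) := by
  simp [Uext, hx]

theorem Uext_of_neg (U : ℝ → ℝ) {x : ℝ} (hx : x < 0) : Uext U x = ⊥ := by
  simp [Uext, hx.ne, not_lt.mpr hx.le]

theorem Uext_zero_le (U : ℝ → ℝ) {z : ℝ} (hz : 0 < z) : Uext U 0 ≤ (U z : EReal) := by
  simp only [Uext, lt_irrefl, if_false, if_true]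
  exact iInf_le (fun z : {z : ℝ // 0 < z} => ((U z.1 : ℝ) : EReal)) ⟨z, hz⟩

theorem Uext_monotone {U : ℝ → ℝ} (hU : IsUtility U) : Monotone (Uext U) := by
  intro x y hxy
  rcases lt_trichotomy x 0 with hx | rfl | hx
  · simp [Uext_of_neg U hx]
  · rcases hxy.eq_or_lt with rfl | hy
    · exact le_rfl
    · rw [Uext_of_pos U hy]; exact Uext_zero_le U hy
  · rw [Uext_of_pos U hx, Uext_of_pos U (hx.trans_le hxy)]
    exact_mod_cast hU.mono hx hxy

/-- The growth condition `U(x)/x → 0` makes the supremum defining `V(y)` finite for `y > 0`. -/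
theorem conj_bddAbove {U : ℝ → ℝ} (hU : IsUtility U) {y : ℝ} (hy : 0 < y) :
    BddAbove ((fun x => U x - x * y) '' Set.Ioi (0 : ℝ)) := by
  obtain ⟨M, hM⟩ := Filter.eventually_atTop.mp (hU.growth.eventually_le_const hy)
  refine ⟨max 0 (U (max M 1)), ?_⟩
  rintro _ ⟨x, hx, rfl⟩
  have hx : 0 < x := hx
  rcases le_total (max M 1) x with h | h
  · have := (div_le_iff₀ hx).mp (hM x ((le_max_left _ _).trans h))
    exact le_max_of_le_left (by dsimp only; linarith)
  · have := hU.mono hx h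
    exact le_max_of_le_right (by dsimp only; nlinarith)

theorem le_conj {U : ℝ → ℝ} (hU : IsUtility U) {x y : ℝ} (hx : 0 < x) (hy : 0 < y) :
    U x - x * y ≤ conj U y :=
  le_csSup (conj_bddAbove hU hy) ⟨x, hx, rfl⟩

theorem exists_dense_seq_pos :
    ∃ r : ℕ → ℝ, (∀ n, 0 < r n) ∧ ∀ a b : ℝ, 0 < a → a < b → ∃ n, a < r n ∧ r n < b := by
  have : Nonempty {q : ℚ // 0 < q} := ⟨⟨1, one_pos⟩⟩
  obtain ⟨f, hf⟩ := exists_surjective_nat {q : ℚ // 0 < q}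
  refine ⟨fun n => ((f n).1 : ℝ), fun n => Rat.cast_pos.mpr (f n).2, fun a b ha hab => ?_⟩
  obtain ⟨q, h1, h2⟩ := exists_rat_btwn hab
  obtain ⟨n, hn⟩ := hf ⟨q, by exact_mod_cast ha.trans h1⟩
  exact ⟨n, by simp [hn, h1, h2]⟩

/-- The supremum defining `V(y)` can be taken over a countable dense set: by monotonicity of `U`,
moving `x` slightly to the right loses at most `y` times the displacement. -/
theorem exists_seq_near_conj {U : ℝ → ℝ} (hU : IsUtility U) {r : ℕ → ℝ}
    (hr : ∀ a b : ℝ, 0 < a → a < b → ∃ n, a < r n ∧ r n < b) {y ε : ℝ} (hy : 0 < y)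
    (hε : 0 < ε) : ∃ n, conj U y - ε < U (r n) - r n * y := by
  obtain ⟨_, ⟨x, hx, rfl⟩, h⟩ := exists_lt_of_lt_csSup
    ((Set.nonempty_Ioi (a := (0 : ℝ))).image (fun x => U x - x * y))
    (show conj U y - ε / 2 < _ by unfold conj; linarith)
  have hx : 0 < x := hx
  obtain ⟨n, h1, h2⟩ := hr x (x + ε / 2 / y) hx (by linarith [div_pos (half_pos hε) hy])
  refine ⟨n, ?_⟩
  have h3 : (r n - x) * y < ε / 2 := by
    rw [← lt_div_iff₀ hy]; linarith
  have := hU.mono hx h1.le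
  dsimp only at h
  linarith

theorem measurable_conj_comp {Ω : Type*} [MeasurableSpace Ω] {U : ℝ → ℝ} (hU : IsUtility U)
    {Y : Ω → ℝ} (hY : Measurable Y) (hpos : ∀ ω, 0 < Y ω) :
    Measurable (fun ω => conj U (Y ω)) := by
  obtain ⟨r, hr0, hr⟩ := exists_dense_seq_pos
  have hlub : ∀ ω, IsLUB (Set.range fun n => U (r n) - r n * Y ω) (conj U (Y ω)) := by
    refine fun ω => ⟨?_, fun b hb => ?_⟩
    · rintro _ ⟨n, rfl⟩
      exact le_conj hU (hr0 n) (hpos ω)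
    · refine le_of_forall_pos_le_add fun ε hε => ?_
      obtain ⟨n, hn⟩ := exists_seq_near_conj hU hr (hpos ω) hε
      have := hb ⟨n, rfl⟩
      dsimp only at this
      linarith
  exact Measurable.isLUB (fun n => measurable_const.sub (hY.const_mul (r n))) hlub

theorem le_of_forall_pos_coe_sub_le {r : ℝ} {c : EReal}
    (h : ∀ ε : ℝ, 0 < ε → ((r - ε : ℝ) : EReal) ≤ c) : (r : EReal) ≤ c := by
  induction c with
  | bot => exact absurd (h 1 one_pos) (by simp [-EReal.coe_sub])
  | top => exact le_top
  | coe c =>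
    have h' : ∀ ε : ℝ, 0 < ε → r - ε ≤ c := fun ε hε => by exact_mod_cast h ε hε
    exact_mod_cast le_of_forall_pos_sub_le h'

theorem coe_mul_bot_add {t : ℝ} (ht : 0 < t) (a : EReal) : (t : EReal) * ⊥ + a = ⊥ := by
  rw [EReal.coe_mul_bot_of_pos ht, EReal.bot_add]

theorem add_coe_mul_bot {t : ℝ} (ht : 0 < t) (a : EReal) : a + (t : EReal) * ⊥ = ⊥ := by
  rw [EReal.coe_mul_bot_of_pos ht, EReal.add_bot]

/-- Concavity of a function that is `⊥` on `(-∞, 0)` only has to be checked at nonnegative points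
and for strict convex combinations. -/
theorem ERealConcave.of_nonneg {g : ℝ → EReal} (hneg : ∀ x < 0, g x = ⊥)
    (h : ∀ x y : ℝ, 0 ≤ x → 0 ≤ y → ∀ s t : ℝ, 0 < s → 0 < t → s + t = 1 →
      (s : EReal) * g x + (t : EReal) * g y ≤ g (s * x + t * y)) : ERealConcave g := by
  intro x y t ht0 ht1
  rcases ht0.eq_or_lt with rfl | ht0
  · simp
  rcases ht1.eq_or_lt with rfl | ht1
  · simp
  rcases lt_or_ge x 0 with hx | hx
  · rw [hneg x hx, coe_mul_bot_add ht0]; exact bot_le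
  rcases lt_or_ge y 0 with hy | hy
  · rw [hneg y hy, add_coe_mul_bot (sub_pos.mpr ht1)]; exact bot_le
  exact h x y hx hy t (1 - t) ht0 (sub_pos.mpr ht1) (by ring)

section Envelope

variable {U : ℝ → ℝ} {Uc : ℝ → EReal}

/-- The envelope lies below every affine majorant `x ↦ V(y) + x y`, cut off to `⊥` on the negative
half-line. -/
theorem envelope_le_cutoff (hU : IsUtility U) (hUc : IsConcaveEnvelope U Uc) {y : ℝ} (hy : 0 < y)
    (x : ℝ) : Uc x ≤ if 0 ≤ x then ((conj U y + x * y : ℝ) : EReal) else ⊥ := by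
  refine hUc.2.2 (fun x => if 0 ≤ x then ((conj U y + x * y : ℝ) : EReal) else ⊥) ?_ ?_ x
  · refine ERealConcave.of_nonneg (fun x hx => by simp [not_le.mpr hx]) ?_
    intro a b ha hb s t hs ht hst
    have hab : 0 ≤ s * a + t * b := by positivity
    simp only [ha, hb, hab, if_true]
    norm_cast
    have : t = 1 - s := by linarith
    subst this
    exact le_of_eq (by ring)
  · intro x
    rcases lt_trichotomy x 0 with hx | rfl | hx
    · simp [Uext_of_neg U hx]
    · rw [if_pos le_rfl]
      -- `U(0)` is the infimum of `U(z)` over `z > 0`, and `U(z) ≤ V(y) + z y` with `z y` small.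
      refine EReal.le_of_forall_lt_iff_le.mp fun z hz => ?_
      have hz : conj U y + 0 * y < z := by exact_mod_cast hz
      have hz0 : 0 < (z - conj U y) / y := div_pos (by linarith) hy
      refine (Uext_zero_le U hz0).trans ?_
      have := le_conj hU hz0 hy
      rw [div_mul_cancel₀ _ hy.ne'] at this
      exact_mod_cast (by linarith)
    · rw [if_pos hx.le, Uext_of_pos U hx]
      have := le_conj hU hx hy
      exact_mod_cast (by linarith)

theorem envelope_le (hU : IsUtility U) (hUc : IsConcaveEnvelope U Uc) {y : ℝ} (hy : 0 < y)
    {x : ℝ} (hx : 0 ≤ x) : Uc x ≤ ((conj U y + x * y : ℝ) : EReal) := by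
  simpa [hx] using envelope_le_cutoff hU hUc hy x

/-- The envelope of a nondecreasing function is nondecreasing: each translate `x ↦ Uc (x + s)` with
`s ≥ 0` is again a concave majorant. -/
theorem envelope_monotone (hU : IsUtility U) (hUc : IsConcaveEnvelope U Uc) : Monotone Uc := by
  intro x y hxy
  have := hUc.2.2 (fun z => Uc (z + (y - x))) (fun a b t h0 h1 => ?_)
    (fun z => (Uext_monotone hU (by linarith)).trans (hUc.2.1 _)) x
  · simpa using this
  · convert hUc.1 (a + (y - x)) (b + (y - x)) t h0 h1 using 2
    ring

theorem envelope_comp_le (hU : IsUtility U) (hUc : IsConcaveEnvelope U Uc)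
    {Ω : Type*} {Z : Ω → ℝ}
    (hZpos : ∀ ω, 0 < Z ω) {q : ℝ} (hq : 0 < q) {f : Ω → ℝ} (hf0 : ∀ ω, 0 ≤ f ω) (ω : Ω) :
    Uc (f ω) ≤ ((conj U (q * Z ω) + q * (Z ω * f ω) : ℝ) : EReal) := by
  have := envelope_le hU hUc (mul_pos hq (hZpos ω)) (hf0 ω)
  rwa [show conj U (q * Z ω) + f ω * (q * Z ω) = conj U (q * Z ω) + q * (Z ω * f ω) by ring]
    at this

end Envelope

/-! ### Expectations of extended-real functions -/

theorem erealPos_mono {a b : EReal} (h : a ≤ b) : erealPos a ≤ erealPos b := by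
  unfold erealPos
  split_ifs with ha hb hb
  · exact le_rfl
  · exact absurd (top_le_iff.mp (ha ▸ h)) hb
  · exact le_top
  · rcases eq_or_ne a ⊥ with rfl | ha'
    · simp
    · exact ENNReal.ofReal_le_ofReal (EReal.toReal_le_toReal h ha' hb)

theorem erealPos_coe (r : ℝ) : erealPos (r : EReal) = ENNReal.ofReal r := by
  simp [erealPos]

theorem erealPos_neg_coe (r : ℝ) : erealPos (-(r : EReal)) = ENNReal.ofReal (-r) := by
  rw [← EReal.coe_neg, erealPos_coe]

section Expectation

variable {Ω : Type*} [MeasurableSpace Ω] {μ : Measure Ω}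

theorem eexp_mono_ae {g h : Ω → EReal} (hgh : ∀ᵐ ω ∂μ, g ω ≤ h ω) : eexp μ g ≤ eexp μ h := by
  by_cases hg : (∫⁻ ω, erealPos (-(g ω)) ∂μ) < ⊤
  · have hneg : (∫⁻ ω, erealPos (-(h ω)) ∂μ) ≤ ∫⁻ ω, erealPos (-(g ω)) ∂μ :=
      lintegral_mono_ae (hgh.mono fun ω hω => erealPos_mono (EReal.neg_le_neg_iff.mpr hω))
    have hpos : (∫⁻ ω, erealPos (g ω) ∂μ) ≤ ∫⁻ ω, erealPos (h ω) ∂μ :=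
      lintegral_mono_ae (hgh.mono fun ω hω => erealPos_mono hω)
    rw [eexp, eexp, if_pos hg, if_pos (hneg.trans_lt hg)]
    refine EReal.sub_le_sub (by exact_mod_cast hpos) ?_
    exact_mod_cast ENNReal.toReal_mono hg.ne hneg
  · rw [eexp, if_neg hg]; exact bot_le

theorem eexp_coe {F : Ω → ℝ} (hF : Integrable F μ) :
    eexp μ (fun ω => (F ω : EReal)) = ((∫ ω, F ω ∂μ : ℝ) : EReal) := by
  have hpos : (∫⁻ ω, ENNReal.ofReal (F ω) ∂μ) ≠ ⊤ :=
    ((lintegral_mono fun ω => Real.ofReal_le_enorm (F ω)).trans_lt hF.2).ne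
  have hneg : (∫⁻ ω, ENNReal.ofReal (-F ω) ∂μ) < ⊤ :=
    (lintegral_mono fun ω => Real.ofReal_le_enorm (-F ω)).trans_lt hF.neg.2
  rw [eexp]
  simp only [erealPos_coe, erealPos_neg_coe]
  rw [if_pos hneg, integral_eq_lintegral_pos_part_sub_lintegral_neg_part hF, EReal.coe_sub,
    EReal.coe_ennreal_toReal hpos]

/-- A function with `E[g] ≠ -∞` that lies below an integrable real function agrees almost
everywhere with an integrable real function. -/
theorem exists_integrable_of_eexp_ne_bot {g : Ω → EReal} (hg : Measurable g) {G : Ω → ℝ}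
    (hG : Integrable G μ) (hgG : ∀ ω, g ω ≤ (G ω : EReal)) (h : eexp μ g ≠ ⊥) :
    ∃ F : Ω → ℝ, Integrable F μ ∧ ∀ᵐ ω ∂μ, g ω = (F ω : EReal) := by
  have hneg : (∫⁻ ω, erealPos (-(g ω)) ∂μ) < ⊤ := by
    by_contra hcon
    exact h (by rw [eexp, if_neg hcon])
  have hpos : (∫⁻ ω, erealPos (g ω) ∂μ) < ⊤ := by
    refine (lintegral_mono fun ω => ?_).trans_lt hG.2
    refine (erealPos_mono (hgG ω)).trans ?_
    rw [erealPos_coe]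
    exact Real.ofReal_le_enorm _
  have hm : Measurable erealPos :=
    Monotone.measurable fun a b hab => erealPos_mono hab
  have hfin : ∀ᵐ ω ∂μ, g ω = ((g ω).toReal : EReal) := by
    filter_upwards [ae_lt_top (hm.comp hg.neg) hneg.ne] with ω hω
    refine (EReal.coe_toReal ((hgG ω).trans_lt (EReal.coe_lt_top _)).ne fun hb => ?_).symm
    simp [hb, erealPos] at hω
  refine ⟨fun ω => (g ω).toReal, ⟨hg.ereal_toReal.aestronglyMeasurable, ?_⟩, hfin⟩
  have hle : ∀ᵐ ω ∂μ, ‖(g ω).toReal‖ₑ ≤ erealPos (g ω) + erealPos (-(g ω)) := by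
    filter_upwards [hfin] with ω hω
    generalize (g ω).toReal = r at hω
    rw [hω, erealPos_coe, erealPos_neg_coe, Real.enorm_eq_ofReal_abs]
    rcases le_total 0 r with h0 | h0
    · rw [abs_of_nonneg h0]; exact le_self_add
    · rw [abs_of_nonpos h0]; exact le_add_self
  refine (lintegral_mono_ae hle).trans_lt ?_
  rw [lintegral_add_left (show Measurable fun ω => erealPos (g ω) from hm.comp hg)]
  exact ENNReal.add_lt_top.mpr ⟨hpos, hneg⟩

end Expectation

/-! ### Supporting lines of a concave function on the half-line -/

/-- A concave function on `(0, ∞)` has a supergradient at every point: the supremum of the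
slopes to the right of the point. -/
theorem exists_supergradient {φ : ℝ → ℝ} (hφ : ConcaveOn ℝ (Set.Ioi 0) φ) {a : ℝ} (ha : 0 < a) :
    ∃ p : ℝ, ∀ x : ℝ, 0 < x → φ x ≤ φ a + p * (x - a) := by
  have hslope : ∀ x z : ℝ, 0 < x → x < a → a < z →
      (φ z - φ a) / (z - a) ≤ (φ a - φ x) / (a - x) := fun x z hx hxa haz =>
    hφ.slope_anti_adjacent hx (ha.trans haz) hxa haz
  set S : Set ℝ := (fun z => (φ z - φ a) / (z - a)) '' Set.Ioi a with hS
  have hne : S.Nonempty := Set.nonempty_Ioi.image _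
  have hbdd : BddAbove S := by
    refine ⟨(φ a - φ (a / 2)) / (a - a / 2), ?_⟩
    rintro _ ⟨z, hz, rfl⟩
    exact hslope _ z (by linarith) (by linarith) hz
  refine ⟨sSup S, fun x hx => ?_⟩
  rcases lt_trichotomy x a with h | rfl | h
  · have h1 : sSup S ≤ (φ a - φ x) / (a - x) := csSup_le hne (by
      rintro _ ⟨z, hz, rfl⟩
      exact hslope x z hx h hz)
    rw [le_div_iff₀ (by linarith)] at h1
    linarith
  · simp
  · have h1 : (φ x - φ a) / (x - a) ≤ sSup S := le_csSup hbdd ⟨x, h, rfl⟩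
    rw [div_le_iff₀ (by linarith)] at h1
    linarith

/-- A nondecreasing concave function has nonnegative supergradients; here a lower bound for `φ` on
`[a, ∞)` suffices. -/
theorem exists_nonneg_supergradient {φ : ℝ → ℝ} (hφ : ConcaveOn ℝ (Set.Ioi 0) φ) {a b : ℝ}
    (ha : 0 < a) (hb : ∀ x, a ≤ x → b ≤ φ x) :
    ∃ p : ℝ, 0 ≤ p ∧ ∀ x : ℝ, 0 < x → φ x ≤ φ a + p * (x - a) := by
  obtain ⟨p, hp⟩ := exists_supergradient hφ ha
  refine ⟨p, ?_, hp⟩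
  by_contra! hneg
  -- For `p < 0` the line drops below `b` at distance `(φ a - b + 1) / (-p)` to the right of `a`.
  have h0 : 0 ≤ (φ a - b + 1) / (-p) :=
    div_nonneg (by linarith [hb a le_rfl]) (by linarith)
  have h1 := hp (a + (φ a - b + 1) / (-p)) (by linarith)
  have h2 := hb (a + (φ a - b + 1) / (-p)) (by linarith)
  have h3 : p * ((φ a - b + 1) / (-p)) = -(φ a - b + 1) := by
    rw [div_neg, mul_neg, mul_div_cancel₀ _ hneg.ne]
  rw [add_sub_cancel_left, h3] at h1
  linarith

/-! ### The dual bound and its attainment -/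

section Duality

variable {Ω : Type*} [MeasurableSpace Ω] {μ : Measure Ω} {Z : Ω → ℝ}

theorem mem_Cset_iff (hZmeas : Measurable Z) (hZpos : ∀ ω, 0 < Z ω) {x : ℝ} (hx : 0 ≤ x)
    {f : Ω → ℝ} : f ∈ Cset μ Z x ↔ Measurable f ∧ (∀ ω, 0 ≤ f ω) ∧
      Integrable (fun ω => Z ω * f ω) μ ∧ ∫ ω, Z ω * f ω ∂μ ≤ x := by
  refine and_congr_right fun hf => and_congr_right fun hf0 => ?_
  have hnn : 0 ≤ᵐ[μ] fun ω => Z ω * f ω :=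
    ae_of_all _ fun ω => mul_nonneg (hZpos ω).le (hf0 ω)
  constructor
  · intro h
    have hInt : Integrable (fun ω => Z ω * f ω) μ :=
      ⟨(hZmeas.mul hf).aestronglyMeasurable,
        (hasFiniteIntegral_iff_ofReal hnn).mpr (h.trans_lt ENNReal.ofReal_lt_top)⟩
    rw [← ofReal_integral_eq_lintegral_ofReal hInt hnn] at h
    exact ⟨hInt, (ENNReal.ofReal_le_ofReal_iff hx).mp h⟩
  · rintro ⟨hInt, h⟩
    rw [← ofReal_integral_eq_lintegral_ofReal hInt hnn]
    exact ENNReal.ofReal_le_ofReal h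

theorem eexp_le_valueFn (W : ℝ → EReal) {x : ℝ} {f : Ω → ℝ} (hf : f ∈ Cset μ Z x) :
    eexp μ (fun ω => W (f ω)) ≤ valueFn μ Z W x :=
  le_iSup₂_of_le f hf le_rfl

variable {U : ℝ → ℝ} {Uc : ℝ → EReal}

/-- The standing assumption `E[V(qZ)] < ∞` gives integrability of `V(qZ)`, since
`V(qZ) ≥ U(1) - qZ` controls the negative part. -/
theorem integrable_conj [IsFiniteMeasure μ] (hZmeas : Measurable Z) (hZpos : ∀ ω, 0 < Z ω)
    (hZint : Integrable Z μ) (hU : IsUtility U)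
    {q : ℝ} (hq : 0 < q) (hV : eexp μ (fun ω => ((conj U (q * Z ω) : ℝ) : EReal)) < ⊤) :
    Integrable (fun ω => conj U (q * Z ω)) μ := by
  have hm := measurable_conj_comp hU (hZmeas.const_mul q) fun ω => mul_pos hq (hZpos ω)
  have hlow : Integrable (fun ω => -(U 1 - q * Z ω)) μ :=
    ((integrable_const (U 1)).sub (hZint.const_mul q)).neg
  have hneg : (∫⁻ ω, ENNReal.ofReal (-conj U (q * Z ω)) ∂μ) < ⊤ := by
    refine (lintegral_mono fun ω => ?_).trans_lt hlow.2
    refine (ENNReal.ofReal_le_ofReal ?_).trans (Real.ofReal_le_enorm _)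
    linarith [le_conj hU one_pos (mul_pos hq (hZpos ω))]
  have hpos : (∫⁻ ω, ENNReal.ofReal (conj U (q * Z ω)) ∂μ) < ⊤ := by
    refine lt_top_iff_ne_top.mpr fun htop => ?_
    rw [eexp] at hV
    simp only [erealPos_coe, erealPos_neg_coe] at hV
    rw [if_pos hneg, htop, EReal.coe_ennreal_top, EReal.top_sub_coe] at hV
    exact lt_irrefl _ hV
  refine ⟨hm.aestronglyMeasurable, ?_⟩
  have hle : ∀ ω, ‖conj U (q * Z ω)‖ₑ ≤
      ENNReal.ofReal (conj U (q * Z ω)) + ENNReal.ofReal (-conj U (q * Z ω)) := by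
    intro ω
    rw [Real.enorm_eq_ofReal_abs]
    rcases le_total 0 (conj U (q * Z ω)) with h0 | h0
    · rw [abs_of_nonneg h0]; exact le_self_add
    · rw [abs_of_nonpos h0]; exact le_add_self
  refine (lintegral_mono hle).trans_lt ?_
  rw [lintegral_add_left hm.ennreal_ofReal]
  exact ENNReal.add_lt_top.mpr ⟨hpos, hneg⟩

/-- Weak duality: `u(x, U_c) ≤ E[V(qZ)] + q x`. -/
theorem valueFn_envelope_le (hZmeas : Measurable Z) (hZpos : ∀ ω, 0 < Z ω)
    (hU : IsUtility U) (hUc : IsConcaveEnvelope U Uc)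
    {q : ℝ} (hq : 0 < q) (hV : Integrable (fun ω => conj U (q * Z ω)) μ) {x : ℝ} (hx : 0 ≤ x) :
    valueFn μ Z Uc x ≤ ((∫ ω, conj U (q * Z ω) ∂μ + q * x : ℝ) : EReal) := by
  refine iSup₂_le fun f hf => ?_
  obtain ⟨hfm, hf0, hfi, hfx⟩ := (mem_Cset_iff hZmeas hZpos hx).mp hf
  refine (eexp_mono_ae (ae_of_all _ (envelope_comp_le hU hUc hZpos hq hf0))).trans ?_
  have hInt : Integrable (fun ω => conj U (q * Z ω) + q * (Z ω * f ω)) μ :=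
    hV.add (hfi.const_mul q)
  rw [eexp_coe hInt, integral_add hV (hfi.const_mul q),
    integral_const_mul]
  have := mul_le_mul_of_nonneg_left hfx hq.le
  exact_mod_cast (by linarith)

/-- The supremum defining `V` may be exchanged with the expectation: choosing measurably, for each
`ω`, a rational near-optimiser of `x ↦ U(x) - q Z(ω) x` gives an attainable `f` whose budget
`E[Z f]` is finite because `V(qZ/2)` is integrable as well. -/
theorem exists_valueFn_ge (hZmeas : Measurable Z) (hZpos : ∀ ω, 0 < Z ω)
    [IsProbabilityMeasure μ] (hU : IsUtility U)
    (hV : ∀ q : ℝ, 0 < q → Integrable (fun ω => conj U (q * Z ω)) μ)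
    {q ε : ℝ} (hq : 0 < q) (hε : 0 < ε) :
    ∃ x : ℝ, 0 < x ∧
      ((∫ ω, conj U (q * Z ω) ∂μ - ε + q * x : ℝ) : EReal) ≤ valueFn μ Z (Uext U) x := by
  classical
  obtain ⟨r, hr0, hr⟩ := exists_dense_seq_pos
  have hqZ : ∀ ω, 0 < q * Z ω := fun ω => mul_pos hq (hZpos ω)
  have hm := measurable_conj_comp hU (hZmeas.const_mul q) hqZ
  have hex : ∀ ω, ∃ n, conj U (q * Z ω) - ε < U (r n) - r n * (q * Z ω) := fun ω =>
    exists_seq_near_conj hU hr (hqZ ω) hε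
  obtain ⟨N, hNm, hN⟩ : ∃ N : Ω → ℕ, Measurable N ∧
      ∀ ω, conj U (q * Z ω) - ε < U (r (N ω)) - r (N ω) * (q * Z ω) := by
    refine ⟨fun ω => Nat.find (hex ω), measurable_find hex fun n => ?_,
      fun ω => Nat.find_spec (hex ω)⟩
    exact measurableSet_lt (hm.sub_const ε)
      (measurable_const.sub ((hZmeas.const_mul q).const_mul (r n)))
  set f : Ω → ℝ := fun ω => r (N ω) with hf
  have hfm : Measurable f := (measurable_of_countable r).comp hNm
  have hf0 : ∀ ω, 0 < f ω := fun ω => hr0 _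
  have hZf0 : ∀ ω, 0 < Z ω * f ω := fun ω => mul_pos (hZpos ω) (hf0 ω)
  have hlow : ∀ ω, conj U (q * Z ω) - ε + q * (Z ω * f ω) ≤ U (f ω) := fun ω => by
    linarith [hN ω, show f ω * (q * Z ω) = q * (Z ω * f ω) by ring]
  have hup : ∀ c : ℝ, 0 < c → ∀ ω, U (f ω) ≤ conj U (c * Z ω) + c * (Z ω * f ω) := fun c hc ω => by
    linarith [le_conj hU (hf0 ω) (mul_pos hc (hZpos ω)),
      show f ω * (c * Z ω) = c * (Z ω * f ω) by ring]
  -- Comparing the lower bound at `q` with the upper bound at `q / 2` bounds `(q / 2) Z f`.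
  have hZfi : Integrable (fun ω => Z ω * f ω) μ := by
    have h1 : Integrable (fun ω => (2 / q) * (conj U (q / 2 * Z ω) - conj U (q * Z ω) + ε)) μ :=
      (((hV _ (half_pos hq)).sub (hV q hq)).add (integrable_const ε)).const_mul _
    refine h1.mono' (hZmeas.mul hfm).aestronglyMeasurable (ae_of_all _ fun ω => ?_)
    rw [Real.norm_of_nonneg (hZf0 ω).le, div_mul_eq_mul_div, le_div_iff₀ hq]
    linarith [hlow ω, hup _ (half_pos hq) ω]
  have hli : Integrable (fun ω => conj U (q * Z ω) - ε + q * (Z ω * f ω)) μ :=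
    ((hV q hq).sub (integrable_const ε)).add (hZfi.const_mul q)
  have hlint : ∫ ω, (conj U (q * Z ω) - ε + q * (Z ω * f ω)) ∂μ =
      ∫ ω, conj U (q * Z ω) ∂μ - ε + q * ∫ ω, Z ω * f ω ∂μ := by
    have h1 : Integrable (fun ω => conj U (q * Z ω) - ε) μ := (hV q hq).sub (integrable_const ε)
    rw [integral_add h1 (hZfi.const_mul q),
      integral_sub (hV q hq) (integrable_const ε), integral_const_mul]
    simp
  refine ⟨∫ ω, Z ω * f ω ∂μ, ?_, ?_⟩
  · rw [integral_pos_iff_support_of_nonneg (fun ω => (hZf0 ω).le) hZfi,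
      show Function.support (fun ω => Z ω * f ω) = Set.univ from
        Set.eq_univ_of_forall fun ω => (hZf0 ω).ne']
    simp
  · have hmem : f ∈ Cset μ Z (∫ ω, Z ω * f ω ∂μ) :=
      (mem_Cset_iff hZmeas hZpos (integral_nonneg fun ω => (hZf0 ω).le)).mpr
        ⟨hfm, fun ω => (hf0 ω).le, hZfi, le_rfl⟩
    refine le_trans ?_ (eexp_le_valueFn (Uext U) hmem)
    rw [← hlint, ← eexp_coe hli]
    refine eexp_mono_ae (ae_of_all _ fun ω => ?_)
    rw [Uext_of_pos U (hf0 ω)]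
    exact_mod_cast hlow ω

/-! ### Concavity of the value function of the envelope -/

/-- Extension of `x ↦ u(x, U_c)` by `⊥` to the negative half-line. -/
noncomputable def envelopeValue (μ : Measure Ω) (Z : Ω → ℝ) (Uc : ℝ → EReal) (x : ℝ) : EReal :=
  if 0 ≤ x then valueFn μ Z Uc x else ⊥

theorem exists_near_optimal (hZmeas : Measurable Z) (hZpos : ∀ ω, 0 < Z ω)
    (hU : IsUtility U) (hUc : IsConcaveEnvelope U Uc)
    (hV : Integrable (fun ω => conj U (1 * Z ω)) μ) {x a : ℝ} (hx : 0 ≤ x)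
    (ha : (a : EReal) < valueFn μ Z Uc x) :
    ∃ f F : Ω → ℝ, f ∈ Cset μ Z x ∧ Integrable F μ ∧ (∀ᵐ ω ∂μ, Uc (f ω) = (F ω : EReal)) ∧
      a < ∫ ω, F ω ∂μ := by
  obtain ⟨f, hfa⟩ := lt_iSup_iff.mp ha
  obtain ⟨hf, hfa⟩ := lt_iSup_iff.mp hfa
  obtain ⟨hfm, hf0, hfi, -⟩ := (mem_Cset_iff hZmeas hZpos hx).mp hf
  obtain ⟨F, hF, hFe⟩ := exists_integrable_of_eexp_ne_bot
    ((envelope_monotone hU hUc).measurable.comp hfm) (hV.add (hfi.const_mul 1))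
    (envelope_comp_le hU hUc hZpos one_pos hf0) (bot_le.trans_lt hfa).ne'
  refine ⟨f, F, hf, hF, hFe, ?_⟩
  have h1 := hfa.trans_le (eexp_mono_ae (hFe.mono fun ω hω => hω.le))
  rw [eexp_coe hF] at h1
  exact_mod_cast h1

/-- `u(·, U_c)` is concave: convex combinations of near-optimisers are attainable from the
combined budget, and `U_c` is concave. -/
theorem envelopeValue_concave (hZmeas : Measurable Z) (hZpos : ∀ ω, 0 < Z ω)
    (hU : IsUtility U) (hUc : IsConcaveEnvelope U Uc)
    (hV : Integrable (fun ω => conj U (1 * Z ω)) μ) :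
    ERealConcave (envelopeValue μ Z Uc) := by
  refine ERealConcave.of_nonneg (fun x hx => by simp [envelopeValue, not_le.mpr hx]) ?_
  intro x y hx hy s t hs ht hst
  have hxy : 0 ≤ s * x + t * y := by positivity
  simp only [envelopeValue, hx, hy, hxy, if_true]
  have hlt : ∀ z : ℝ, 0 ≤ z → valueFn μ Z Uc z ≠ ⊤ := fun z hz =>
    ((valueFn_envelope_le hZmeas hZpos hU hUc one_pos hV hz).trans_lt (EReal.coe_lt_top _)).ne
  rcases eq_or_ne (valueFn μ Z Uc x) ⊥ with hbx | hbx
  · rw [hbx, coe_mul_bot_add hs]; exact bot_le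
  rcases eq_or_ne (valueFn μ Z Uc y) ⊥ with hby | hby
  · rw [hby, add_coe_mul_bot ht]; exact bot_le
  obtain ⟨a, ha⟩ : ∃ a : ℝ, valueFn μ Z Uc x = a :=
    ⟨_, (EReal.coe_toReal (hlt x hx) hbx).symm⟩
  obtain ⟨b, hb⟩ : ∃ b : ℝ, valueFn μ Z Uc y = b :=
    ⟨_, (EReal.coe_toReal (hlt y hy) hby).symm⟩
  rw [ha, hb, ← EReal.coe_mul, ← EReal.coe_mul, ← EReal.coe_add]
  refine le_of_forall_pos_coe_sub_le fun ε hε => ?_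
  obtain ⟨f, F, hf, hF, hFe, hFa⟩ := exists_near_optimal hZmeas hZpos hU hUc hV hx
    (show ((a - ε : ℝ) : EReal) < _ by rw [ha]; exact_mod_cast sub_lt_self a hε)
  obtain ⟨g, G, hg, hG, hGe, hGb⟩ := exists_near_optimal hZmeas hZpos hU hUc hV hy
    (show ((b - ε : ℝ) : EReal) < _ by rw [hb]; exact_mod_cast sub_lt_self b hε)
  obtain ⟨hfm, hf0, hfi, hfx⟩ := (mem_Cset_iff hZmeas hZpos hx).mp hf
  obtain ⟨hgm, hg0, hgi, hgy⟩ := (mem_Cset_iff hZmeas hZpos hy).mp hg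
  have hmem : (fun ω => s * f ω + t * g ω) ∈ Cset μ Z (s * x + t * y) := by
    have heq : (fun ω => Z ω * (s * f ω + t * g ω)) =
        fun ω => s * (Z ω * f ω) + t * (Z ω * g ω) := by ext ω; ring
    refine (mem_Cset_iff hZmeas hZpos hxy).mpr ⟨(hfm.const_mul s).add (hgm.const_mul t),
      fun ω => add_nonneg (mul_nonneg hs.le (hf0 ω)) (mul_nonneg ht.le (hg0 ω)), ?_, ?_⟩
    · rw [heq]
      exact (hfi.const_mul s).add (hgi.const_mul t)
    · rw [heq, integral_add (hfi.const_mul s) (hgi.const_mul t), integral_const_mul,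
        integral_const_mul]
      gcongr
  refine le_trans ?_ (eexp_le_valueFn Uc hmem)
  have hInt : Integrable (fun ω => s * F ω + t * G ω) μ := (hF.const_mul s).add (hG.const_mul t)
  have hle : ∀ᵐ ω ∂μ, ((s * F ω + t * G ω : ℝ) : EReal) ≤ Uc (s * f ω + t * g ω) := by
    filter_upwards [hFe, hGe] with ω h1 h2
    have h3 := hUc.1 (f ω) (g ω) s hs.le (by linarith)
    rw [h1, h2, show 1 - s = t by linarith] at h3
    exact_mod_cast h3
  refine le_trans ?_ (eexp_mono_ae hle)
  rw [eexp_coe hInt, integral_add (hF.const_mul s) (hG.const_mul t), integral_const_mul,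
    integral_const_mul, EReal.coe_le_coe_iff]
  have h1 := mul_le_mul_of_nonneg_left hFa.le hs.le
  have h2 := mul_le_mul_of_nonneg_left hGb.le ht.le
  have h3 : s * (a - ε) + t * (b - ε) = s * a + t * b - ε := by
    linear_combination (-ε) * hst
  linarith

end Duality

/-- Under the dual integrability assumption, `x ↦ u(x, U_c)` coincides on `(0,∞)` with
the concave envelope of the value function `x ↦ u(x, U)` (extended by `−∞` on
`(−∞, 0)`). -/
theorem value_of_envelope_eq_envelope_of_value
    {Ω : Type*} [MeasurableSpace Ω] (μ : MeasureTheory.Measure Ω)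
    [MeasureTheory.IsProbabilityMeasure μ]
    (Z : Ω → ℝ) (hZmeas : Measurable Z) (hZpos : ∀ ω, 0 < Z ω)
    (hZint : MeasureTheory.Integrable Z μ) (hZexp : ∫ ω, Z ω ∂μ = 1)
    (U : ℝ → ℝ) (hU : IsUtility U) (Uc : ℝ → EReal) (hUc : IsConcaveEnvelope U Uc)
    (hV : ∀ y : ℝ, 0 < y → eexp μ (fun ω => ((conj U (y * Z ω) : ℝ) : EReal)) < ⊤)
    (env : ℝ → EReal) (henvConc : ERealConcave env)
    (henvGe : ∀ t : ℝ, (if 0 ≤ t then valueFn μ Z (Uext U) t else ⊥) ≤ env t)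
    (henvMin : ∀ g : ℝ → EReal, ERealConcave g →
      (∀ t : ℝ, (if 0 ≤ t then valueFn μ Z (Uext U) t else ⊥) ≤ g t) →
      ∀ t : ℝ, env t ≤ g t) :
    ∀ x : ℝ, 0 < x → env x = valueFn μ Z Uc x := by
  have hVi : ∀ q : ℝ, 0 < q → Integrable (fun ω => conj U (q * Z ω)) μ := fun q hq =>
    integrable_conj hZmeas hZpos hZint hU hq (hV q hq)
  have hle : ∀ t : ℝ, env t ≤ envelopeValue μ Z Uc t := by
    refine henvMin _ (envelopeValue_concave hZmeas hZpos hU hUc (hVi 1 one_pos)) fun t => ?_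
    unfold envelopeValue
    split_ifs
    · exact iSup₂_mono fun f _ => eexp_mono_ae (ae_of_all _ fun ω => hUc.2.1 _)
    · exact le_rfl
  have hle' : ∀ x : ℝ, 0 < x → env x ≤ valueFn μ Z Uc x := fun x hx => by
    simpa [envelopeValue, hx.le] using hle x
  have hge : ∀ x : ℝ, 0 < x → valueFn μ Z (Uext U) x ≤ env x := fun x hx => by
    simpa [hx.le] using henvGe x
  -- The constant payoff `x` costs `x`, so `U(x) ≤ u(x, U)`.
  have hUenv : ∀ x : ℝ, 0 < x → (U x : EReal) ≤ env x := by
    intro x hx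
    have hmem : (fun _ : Ω => x) ∈ Cset μ Z x :=
      (mem_Cset_iff hZmeas hZpos hx.le).mpr ⟨measurable_const, fun _ => hx.le,
        hZint.mul_const x, by rw [integral_mul_const, hZexp, one_mul]⟩
    refine le_trans ?_ (hge x hx)
    refine le_trans ?_ (eexp_le_valueFn (Uext U) hmem)
    simp only [Uext_of_pos U hx]
    rw [eexp_coe (integrable_const (U x))]
    simp
  have hreal : ∀ x : ℝ, 0 < x → env x = ((env x).toReal : EReal) := by
    refine fun x hx => (EReal.coe_toReal ?_ ((EReal.bot_lt_coe _).trans_le (hUenv x hx)).ne').symm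
    exact ((hle' x hx).trans_lt ((valueFn_envelope_le hZmeas hZpos hU hUc one_pos
      (hVi 1 one_pos) hx.le).trans_lt (EReal.coe_lt_top _))).ne
  set φ : ℝ → ℝ := fun x => (env x).toReal with hφ
  have hφc : ConcaveOn ℝ (Set.Ioi 0) φ := by
    refine ⟨convex_Ioi 0, fun x hx y hy s t hs ht hst => ?_⟩
    have hxy : s • x + t • y ∈ Set.Ioi (0 : ℝ) := convex_Ioi 0 hx hy hs ht hst
    simp only [smul_eq_mul] at hxy ⊢
    have h := henvConc x y s hs (by linarith)
    rw [show 1 - s = t by linarith, hreal x hx, hreal y hy, hreal _ hxy] at h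
    exact_mod_cast h
  intro x hx
  refine le_antisymm (hle' x hx) ?_
  obtain ⟨p, hp0, hp⟩ := exists_nonneg_supergradient hφc (b := U x) hx fun z hz => by
    have h := hUenv z (hx.trans_le hz)
    rw [hreal z (hx.trans_le hz)] at h
    exact (hU.mono hx hz).trans (by exact_mod_cast h)
  -- Dual points must be positive, whereas `p` may vanish; so the dual point `p + ε` is used.
  have key : ∀ ε : ℝ, 0 < ε → ∫ ω, conj U ((p + ε) * Z ω) ∂μ ≤ φ x - p * x + ε := by
    intro ε hε
    obtain ⟨z, hz, h⟩ := exists_valueFn_ge hZmeas hZpos hU hVi (add_pos_of_nonneg_of_pos hp0 hε) hε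
    have h1 := h.trans (hge z hz)
    rw [hreal z hz] at h1
    have h2 : ∫ ω, conj U ((p + ε) * Z ω) ∂μ - ε + (p + ε) * z ≤ φ z := by exact_mod_cast h1
    nlinarith [hp z hz, mul_pos hε hz]
  rw [hreal x hx]
  refine EReal.le_of_forall_lt_iff_le.mp fun c hc => ?_
  have hc : φ x < c := by exact_mod_cast hc
  have hε : 0 < (c - φ x) / (1 + x) := div_pos (by linarith) (by linarith)
  refine (valueFn_envelope_le hZmeas hZpos hU hUc (add_pos_of_nonneg_of_pos hp0 hε)
    (hVi _ (add_pos_of_nonneg_of_pos hp0 hε)) hx.le).trans ?_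
  have h1 := key _ hε
  have h2 : (c - φ x) / (1 + x) * (1 + x) = c - φ x := div_mul_cancel₀ _ (by linarith)
  exact_mod_cast (by linarith)
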